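/- A generalised multi-clause-set F is matching lean if and only if there exists a subgraph of the bipartite graph B(F) which is a forest, covers all variable-nodes of B(F), and in which every variable-node has degree exactly 2. -/

import Mathlib

set_option linter.unusedSectionVars false
set_option linter.unusedVariables false

open scoped Classical

namespace GCLS

variable {V α : Type} [DecidableEq V] [DecidableEq α]

/-- A finite "functional" set of (variable, value) pairs, with values inside the
given domains `D`; used both for clauses and for partial assignments. -/
def FinFn (D : V → Finset α) : Type :=
  { s : Finset (V × α) // (∀ p ∈ s, p.2 ∈ D p.1) ∧
      ∀ p ∈ s, ∀ q ∈ s, p.1 = q.1 → p = q }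

variable {D : V → Finset α}

instance : DecidableEq (FinFn D) :=
  fun a b => decidable_of_iff (a.1 = b.1) Subtype.ext_iff.symm

namespace FinFn

/-- The set of variables occurring. -/
def vars (s : FinFn D) : Finset V := s.1.image Prod.fst

/-- Restriction to the pairs whose variable lies in `W`. -/
def restrictVars (s : FinFn D) (W : Finset V) : FinFn D :=
  ⟨s.1.filter (fun p => p.1 ∈ W),
   fun p hp => s.2.1 p (Finset.mem_filter.mp hp).1,
   fun p hp q hq h =>
     s.2.2 p (Finset.mem_filter.mp hp).1 q (Finset.mem_filter.mp hq).1 h⟩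

/-- Removal of a set of pairs. -/
def sdiff (s : FinFn D) (t : Finset (V × α)) : FinFn D :=
  ⟨s.1 \ t,
   fun p hp => s.2.1 p (Finset.mem_sdiff.mp hp).1,
   fun p hp q hq h =>
     s.2.2 p (Finset.mem_sdiff.mp hp).1 q (Finset.mem_sdiff.mp hq).1 h⟩

end FinFn

/-- Clauses: finite sets of literals `(v,ε)` (meaning "v ≠ ε"), at most one literal
per variable, values inside the domains. -/
abbrev Clause (D : V → Finset α) := FinFn D

/-- Partial assignments: finitely many variables get values inside their domains. -/
abbrev PAssign (D : V → Finset α) := FinFn D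

/-- `φ` satisfies the literal `(v,ε)` (i.e. "v ≠ ε"): `v` is assigned a value ≠ `ε`. -/
def SatLit (φ : PAssign D) (l : V × α) : Prop :=
  ∃ ε, (l.1, ε) ∈ φ.1 ∧ ε ≠ l.2

/-- `φ` satisfies a clause iff it satisfies some literal of it. -/
def SatClause (φ : PAssign D) (C : Clause D) : Prop :=
  ∃ l ∈ C.1, SatLit φ l

/-- The clause obtained from `C` by deleting all literals falsified by `φ`. -/
def Clause.restrict (φ : PAssign D) (C : Clause D) : Clause D :=
  FinFn.sdiff C φ.1

/-- The operation `φ * F` on multi-clause-sets: remove all clauses satisfied by `φ`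
and delete all falsified literals from the remaining clauses. -/
noncomputable def applyM (φ : PAssign D) (F : Multiset (Clause D)) : Multiset (Clause D) :=
  (F.filter (fun C => ¬ SatClause φ C)).map (Clause.restrict φ)

/-- The operation `φ * F` on clause-sets (with contraction of equal clauses). -/
noncomputable def applyF (φ : PAssign D) (F : Finset (Clause D)) : Finset (Clause D) :=
  (F.filter (fun C => ¬ SatClause φ C)).image (Clause.restrict φ)

/-- Satisfiability: some partial assignment satisfies all clauses. -/
def Sat (F : Multiset (Clause D)) : Prop :=
  ∃ φ : PAssign D, applyM φ F = 0

/-- Minimal unsatisfiability of a clause-set. -/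
def MinUnsat (F : Finset (Clause D)) : Prop :=
  ¬ Sat F.val ∧ ∀ F' ⊂ F, Sat F'.val

/-- The variables of a multi-clause-set. -/
def mvars (F : Multiset (Clause D)) : Finset V := F.toFinset.sup FinFn.vars

/-- The deficiency `δ(F) = c(F) - Σ_{v ∈ var(F)} (|D_v| - 1)`. -/
def delta (F : Multiset (Clause D)) : ℤ :=
  (Multiset.card F : ℤ) - ∑ v ∈ mvars F, ((D v).card - 1 : ℤ)

lemma powerset_toFinset_nonempty (F : Multiset (Clause D)) :
    F.powerset.toFinset.Nonempty :=
  ⟨0, by simp⟩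

/-- The maximal deficiency `δ*(F) = max {δ(F') : F' ≤ F}`. -/
noncomputable def deltaStar (F : Multiset (Clause D)) : ℤ :=
  F.powerset.toFinset.sup' (powerset_toFinset_nonempty F) delta

/-- A tight sub-multi-clause-set: `F' ≤ F` with `δ(F') = δ*(F)`. -/
noncomputable def Tight (F F' : Multiset (Clause D)) : Prop :=
  F' ≤ F ∧ delta F' = deltaStar F

/-- `F` is matching satisfiable: the clause-variable graph `B(F)` has a matching
covering all clause-nodes.  Such a matching is encoded as a multiset `P` of pairs
(clause-occurrence, variable-node), where the variable-nodes `(v,k)`,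
`k < |D v| - 1`, are the copies of the variable `v`; the matching covers each
clause-occurrence exactly once (`P.map Prod.fst = F`), uses pairwise distinct
variable-nodes, and respects adjacency in `B(F)`. -/
def MatchingSat (F : Multiset (Clause D)) : Prop :=
  ∃ P : Multiset (Clause D × (V × ℕ)),
    P.map Prod.fst = F ∧ (P.map Prod.snd).Nodup ∧
    ∀ p ∈ P, p.2.1 ∈ FinFn.vars p.1 ∧ p.2.2 < (D p.2.1).card - 1

/-- The edge between clause `C` and the copies of variable `v` is retained in
`B_φ(F)`: the literal of `C` with variable `v` is satisfied by `φ`. -/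
def EdgeSat (φ : PAssign D) (C : Clause D) (v : V) : Prop :=
  ∃ ε, (v, ε) ∈ C.1 ∧ SatLit φ (v, ε)

/-- `φ` is matching-satisfying for `F`: `B_φ(F)` has a matching covering all
clause-nodes. -/
def MatchingSatisfying (φ : PAssign D) (F : Multiset (Clause D)) : Prop :=
  ∃ P : Multiset (Clause D × (V × ℕ)),
    P.map Prod.fst = F ∧ (P.map Prod.snd).Nodup ∧
    ∀ p ∈ P, p.2.2 < (D p.2.1).card - 1 ∧ EdgeSat φ p.1 p.2.1

/-- The maximum size of a matching in `B(F)`. -/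
noncomputable def nu (F : Multiset (Clause D)) : ℕ :=
  sSup { k | ∃ P : Multiset (Clause D × (V × ℕ)),
    P.map Prod.fst ≤ F ∧ (P.map Prod.snd).Nodup ∧
    (∀ p ∈ P, p.2.1 ∈ FinFn.vars p.1 ∧ p.2.2 < (D p.2.1).card - 1) ∧
    Multiset.card P = k }

/-- The maximum size of a matching in `B_φ(F)`. -/
noncomputable def nuSub (φ : PAssign D) (F : Multiset (Clause D)) : ℕ :=
  sSup { k | ∃ P : Multiset (Clause D × (V × ℕ)),
    P.map Prod.fst ≤ F ∧ (P.map Prod.snd).Nodup ∧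
    (∀ p ∈ P, p.2.2 < (D p.2.1).card - 1 ∧ EdgeSat φ p.1 p.2.1) ∧
    Multiset.card P = k }

/-- `φ` is matching-maximum for `F`. -/
noncomputable def MatchingMaximum (φ : PAssign D) (F : Multiset (Clause D)) : Prop :=
  nuSub φ F = nu F

/-- `φ` is an autarky for `F`: every clause touched by `φ` is satisfied by `φ`. -/
def IsAutarky (φ : PAssign D) (F : Multiset (Clause D)) : Prop :=
  ∀ C ∈ F, (FinFn.vars C ∩ FinFn.vars φ).Nonempty → SatClause φ C

/-- `F` is lean: it has no non-trivial autarky. -/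
def IsLean (F : Multiset (Clause D)) : Prop :=
  ¬ ∃ φ : PAssign D, IsAutarky φ F ∧ (FinFn.vars φ ∩ mvars F).Nonempty

/-- The sub-multi-clause-set of clauses touched by the variables in `W`. -/
noncomputable def touchedBy (F : Multiset (Clause D)) (W : Finset V) : Multiset (Clause D) :=
  F.filter (fun C => (FinFn.vars C ∩ W).Nonempty)

/-- The restriction `F[W]`: keep the clauses touching `W` and delete from them all
literals whose variable is not in `W`. -/
noncomputable def restrictTo (F : Multiset (Clause D)) (W : Finset V) : Multiset (Clause D) :=
  (touchedBy F W).map (fun C => FinFn.restrictVars C W)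

/-- `φ` is a matching autarky for `F`: `φ` is matching-satisfying for the
sub-multi-clause-set of clauses touched by `φ`. -/
noncomputable def IsMatchingAutarky (φ : PAssign D) (F : Multiset (Clause D)) : Prop :=
  MatchingSatisfying φ (touchedBy F (FinFn.vars φ))

/-- `F` is matching lean: no non-trivial matching autarky. -/
noncomputable def MatchingLean (F : Multiset (Clause D)) : Prop :=
  ¬ ∃ φ : PAssign D, IsMatchingAutarky φ F ∧ (FinFn.vars φ ∩ mvars F).Nonempty

lemma surp_nonempty {F : Multiset (Clause D)} (h : (mvars F).Nonempty) :
    ((mvars F).powerset.erase ∅).Nonempty := by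
  obtain ⟨v, hv⟩ := h
  refine ⟨{v}, ?_⟩
  simp [Finset.mem_erase, Finset.singleton_subset_iff, hv]

/-- The surplus `surp(F) = min {δ(F[W]) : ∅ ≠ W ⊆ var(F)}` (and `0` if `var(F) = ∅`). -/
noncomputable def surp (F : Multiset (Clause D)) : ℤ :=
  if h : (mvars F).Nonempty then
    ((mvars F).powerset.erase ∅).inf' (surp_nonempty h)
      (fun W => delta (restrictTo F W))
  else 0

/-- The number of occurrences of the literal `l` in `F`. -/
noncomputable def litCount (F : Multiset (Clause D)) (l : V × α) : ℕ :=
  Multiset.card (F.filter (fun C => l ∈ C.1))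

/-- The number of occurrences `#_v(F)` of the variable `v` in `F`. -/
noncomputable def varCount (F : Multiset (Clause D)) (v : V) : ℕ :=
  ∑ ε ∈ D v, litCount F (v, ε)

/-- The partial assignment `⟨v → ε⟩`. -/
def single (v : V) (ε : α) (hε : ε ∈ D v) : PAssign D :=
  ⟨{(v, ε)}, by
    refine ⟨?_, ?_⟩
    · intro p hp
      rw [Finset.mem_singleton] at hp
      subst hp; exact hε
    · intro p hp q hq _
      rw [Finset.mem_singleton] at hp hq
      subst hp; subst hq; rfl⟩

/-- Composition `φ ∘ ψ` of partial assignments: domain is the union of the domains,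
`ψ` taking precedence. -/
def comp (φ ψ : PAssign D) : PAssign D :=
  ⟨ψ.1 ∪ φ.1.filter (fun p => p.1 ∉ FinFn.vars ψ), by
    constructor
    · intro p hp
      rcases Finset.mem_union.mp hp with h | h
      · exact ψ.2.1 p h
      · exact φ.2.1 p (Finset.mem_filter.mp h).1
    · intro p hp q hq hpq
      rcases Finset.mem_union.mp hp with h1 | h1 <;>
        rcases Finset.mem_union.mp hq with h2 | h2
      · exact ψ.2.2 p h1 q h2 hpq
      · exact absurd (hpq ▸ Finset.mem_image_of_mem Prod.fst h1)
          (Finset.mem_filter.mp h2).2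
      · exact absurd (hpq.symm ▸ Finset.mem_image_of_mem Prod.fst h2)
          (Finset.mem_filter.mp h1).2
      · exact φ.2.2 p (Finset.mem_filter.mp h1).1 q (Finset.mem_filter.mp h2).1 hpq⟩

/-- Two clauses clash (in some variable). -/
def Clash (C C' : Clause D) : Prop :=
  ∃ v ε ε', (v, ε) ∈ C.1 ∧ (v, ε') ∈ C'.1 ∧ ε ≠ ε'

/-- The number of variables in which two clauses clash. -/
noncomputable def clashCount (C C' : Clause D) : ℕ :=
  ((FinFn.vars C).filter
    (fun v => ∃ ε ε', (v, ε) ∈ C.1 ∧ (v, ε') ∈ C'.1 ∧ ε ≠ ε')).card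

/-- Hitting clause-sets: every two distinct clauses clash. -/
def Hitting (F : Finset (Clause D)) : Prop :=
  ∀ C ∈ F, ∀ C' ∈ F, C ≠ C' → Clash C C'

/-- Boolean clauses over the boolean variables `V × α` (one boolean variable per
generalised literal; the value `false` gives the positive boolean literal). -/
abbrev BClause (V α : Type) :=
  Clause (fun _ : V × α => (Finset.univ : Finset Bool))

/-- The direct translation of a single clause: each literal `(v,ε)` is replaced by
the positive boolean literal of the boolean variable `(v,ε)`. -/
def dirClause (C : Clause D) : BClause V α :=
  ⟨C.1.image (fun p => (p, false)), by
    constructor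
    · intro p _; exact Finset.mem_univ _
    · intro p hp q hq h
      simp only [Finset.mem_image] at hp hq
      obtain ⟨a, -, rfl⟩ := hp
      obtain ⟨b, -, rfl⟩ := hq
      exact congrArg (fun x => (x, false)) h⟩

/-- The ALO-clause for a variable `v`: the negative boolean literals of the boolean
variables `(v,ε)` for `ε ∈ D v`. -/
def aloClause (D : V → Finset α) (v : V) : BClause V α :=
  ⟨(D v).image (fun ε => ((v, ε), true)), by
    constructor
    · intro p _; exact Finset.mem_univ _
    · intro p hp q hq h
      simp only [Finset.mem_image] at hp hq
      obtain ⟨a, -, rfl⟩ := hp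
      obtain ⟨b, -, rfl⟩ := hq
      exact congrArg (fun x => (x, true)) h⟩

/-- The direct translation `Γ(F)`: the translated clauses together with the
ALO-clauses for all occurring variables. -/
noncomputable def dirTrans (F : Finset (Clause D)) : Finset (BClause V α) :=
  F.image dirClause ∪ (mvars F.val).image (aloClause D)

lemma lov {ι β : Type} [DecidableEq ι] [DecidableEq β] (T : Finset ι) (n : ℕ) :
    ∀ A : ι → Finset β, (∑ i ∈ T, (A i).card = n) →
    (∀ I ⊆ T, I.Nonempty → I.card + 1 ≤ (I.biUnion A).card) →
    ∃ B : ι → Finset β, (∀ i, B i ⊆ A i) ∧ (∀ i ∈ T, (B i).card = 2) ∧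
      (∀ I ⊆ T, I.Nonempty → I.card + 1 ≤ (I.biUnion B).card) := by
  induction n using Nat.strong_induction_on with
  | _ n ih =>
  intro A hn hA
  by_cases hall : ∀ i ∈ T, (A i).card ≤ 2
  · refine ⟨A, fun i => subset_rfl, fun i hi => ?_, hA⟩
    have h1 := hA {i} (by simpa using hi) (by simp)
    have h2 := hall i hi
    simp at h1
    omega
  push Not at hall
  obtain ⟨i, hi, hc⟩ := hall
  -- for some x in A i, removal works
  by_cases hx : ∃ x ∈ A i, ∀ I ⊆ T, I.Nonempty →
      I.card + 1 ≤ (I.biUnion (Function.update A i ((A i).erase x))).card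
  · obtain ⟨x, hx, h⟩ := hx
    have hlt : ∑ j ∈ T, (Function.update A i ((A i).erase x) j).card < n := by
      rw [← hn]
      apply Finset.sum_lt_sum
      · intro j hj
        by_cases hji : j = i
        · subst hji
          simp [Finset.card_erase_le]
        · simp [hji]
      · refine ⟨i, hi, ?_⟩
        simp only [Function.update_self]
        exact Finset.card_erase_lt_of_mem hx
    obtain ⟨B, hB1, hB2, hB3⟩ := ih _ hlt _ rfl h
    refine ⟨B, fun j => (hB1 j).trans ?_, hB2, hB3⟩
    by_cases hji : j = i
    · subst hji
      simp [Finset.erase_subset]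
    · simp [hji]
  exfalso
  have key : ∀ x ∈ A i, ∃ I ⊆ T, i ∉ I ∧ (I.biUnion A ∪ (A i).erase x).card ≤ I.card + 1 := by
    intro x hxA
    by_contra hcon
    push Not at hcon
    apply hx
    refine ⟨x, hxA, fun I hIT hI => ?_⟩
    by_cases hiI : i ∈ I
    · have h1 := hcon (I.erase i) ((Finset.erase_subset _ _).trans hIT) (by simp)
      have h2 : (I.erase i).card + 1 = I.card := Finset.card_erase_add_one hiI
      have h3 : (I.erase i).biUnion A ∪ (A i).erase x ⊆
          I.biUnion (Function.update A i ((A i).erase x)) := by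
        intro y hy
        rw [Finset.mem_union] at hy
        rw [Finset.mem_biUnion]
        rcases hy with hy | hy
        · rw [Finset.mem_biUnion] at hy
          obtain ⟨j, hj, hy⟩ := hy
          rw [Finset.mem_erase] at hj
          exact ⟨j, hj.2, by simpa [hj.1] using hy⟩
        · exact ⟨i, hiI, by simpa using hy⟩
      have h4 := Finset.card_le_card h3
      omega
    · have : I.biUnion (Function.update A i ((A i).erase x)) = I.biUnion A := by
        apply Finset.biUnion_congr rfl
        intro j hj
        have : j ≠ i := fun h => hiI (h ▸ hj)
        simp [this]
      rw [this]
      exact hA I hIT hI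
  obtain ⟨x, hxA, y, hyA, hxy⟩ := Finset.one_lt_card.mp (show 1 < (A i).card by omega)
  obtain ⟨I, hIT, hiI, hI⟩ := key x hxA
  obtain ⟨J, hJT, hiJ, hJ⟩ := key y hyA
  set B := I.biUnion A ∪ (A i).erase x with hB
  set C := J.biUnion A ∪ (A i).erase y with hC
  have e1 : (B ∪ C).card + (B ∩ C).card = B.card + C.card := Finset.card_union_add_card_inter _ _
  have e2 : (I ∪ J).card + (I ∩ J).card = I.card + J.card := Finset.card_union_add_card_inter _ _
  have e3 : (I ∪ J).card + 2 ≤ (B ∪ C).card := by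
    have h1 := hA (insert i (I ∪ J)) (Finset.insert_subset hi (Finset.union_subset hIT hJT))
      (by simp)
    rw [Finset.card_insert_of_notMem (by simp [hiI, hiJ])] at h1
    refine h1.trans (Finset.card_le_card ?_)
    intro z hz
    simp only [hB, hC, Finset.mem_union, Finset.mem_biUnion, Finset.mem_insert,
      Finset.mem_erase] at hz ⊢
    obtain ⟨j, hj, hz⟩ := hz
    rcases hj with rfl | hj | hj
    · by_cases hzx : z = x
      · subst hzx; exact Or.inr (Or.inr ⟨hxy, hz⟩)
      · exact Or.inl (Or.inr ⟨hzx, hz⟩)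
    · exact Or.inl (Or.inl ⟨j, hj, hz⟩)
    · exact Or.inr (Or.inl ⟨j, hj, hz⟩)
  have e4 : (I ∩ J).card + 1 ≤ (B ∩ C).card := by
    by_cases hne : (I ∩ J).Nonempty
    · refine (hA (I ∩ J) (Finset.inter_subset_left.trans hIT) hne).trans (Finset.card_le_card ?_)
      intro z hz
      simp only [hB, hC, Finset.mem_union, Finset.mem_biUnion, Finset.mem_inter] at hz ⊢
      obtain ⟨j, hj, hz⟩ := hz
      exact ⟨Or.inl ⟨j, hj.1, hz⟩, Or.inl ⟨j, hj.2, hz⟩⟩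
    · rw [Finset.not_nonempty_iff_eq_empty] at hne
      rw [hne, Finset.card_empty]
      have h1 : ((A i).erase x).erase y ⊆ B ∩ C := by
        intro z hz
        simp only [Finset.mem_erase] at hz
        simp only [hB, hC, Finset.mem_union, Finset.mem_inter, Finset.mem_erase]
        exact ⟨Or.inr ⟨hz.2.1, hz.2.2⟩, Or.inr ⟨hz.1, hz.2.2⟩⟩
      have h2 := Finset.card_le_card h1
      have h3 := Finset.pred_card_le_card_erase (s := (A i).erase x) (a := y)
      have h4 := Finset.pred_card_le_card_erase (s := A i) (a := x)
      omega
  omega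

/-- variable nodes over a set of variables -/
def nodes (D : V → Finset α) (W : Finset V) : Finset (V × ℕ) :=
  W.biUnion (fun v => (Finset.range ((D v).card - 1)).image (Prod.mk v))

lemma mem_nodes (W : Finset V) (u : V × ℕ) :
    u ∈ nodes D W ↔ u.1 ∈ W ∧ u.2 < (D u.1).card - 1 := by
  obtain ⟨v, k⟩ := u
  simp only [nodes, Finset.mem_biUnion, Finset.mem_image, Finset.mem_range, Prod.mk.injEq]
  constructor
  · rintro ⟨a, ha, b, hb, rfl, rfl⟩
    exact ⟨ha, hb⟩
  · rintro ⟨h1, h2⟩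
    exact ⟨v, h1, k, h2, rfl, rfl⟩

/-- clause indices touched by a set of variables -/
noncomputable def nbr (L : List (Clause D)) (W : Finset V) : Finset (Fin L.length) :=
  Finset.univ.filter (fun i => (FinFn.vars (L.get i) ∩ W).Nonempty)

lemma mem_nbr (L : List (Clause D)) (W : Finset V) (i : Fin L.length) :
    i ∈ nbr L W ↔ ∃ v ∈ W, v ∈ FinFn.vars (L.get i) := by
  simp only [nbr, Finset.mem_filter, Finset.mem_univ, true_and, Finset.Nonempty, Finset.mem_inter]
  constructor
  · rintro ⟨v, h1, h2⟩; exact ⟨v, h2, h1⟩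
  · rintro ⟨v, h1, h2⟩; exact ⟨v, h2, h1⟩

lemma touched_eq (L : List (Clause D)) (W : Finset V) :
    touchedBy (↑L : Multiset (Clause D)) W = (nbr L W).val.map L.get := by
  have h : (↑L : Multiset (Clause D)) = (Finset.univ : Finset (Fin L.length)).val.map L.get := by
    simp
  rw [touchedBy, h, Multiset.filter_map]
  rfl

lemma mem_mvars (F : Multiset (Clause D)) (v : V) :
    v ∈ mvars F ↔ ∃ C ∈ F, v ∈ FinFn.vars C := by
  simp [mvars, Finset.mem_sup]

lemma mem_vars (C : FinFn D) (v : V) : v ∈ FinFn.vars C ↔ ∃ ε, (v, ε) ∈ C.1 := by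
  simp [FinFn.vars]

/-- strict surplus -/
def Surp (L : List (Clause D)) : Prop :=
  ∀ W ⊆ mvars (↑L : Multiset (Clause D)), W.Nonempty → (nodes D W).card + 1 ≤ (nbr L W).card

lemma lean_of_surp (L : List (Clause D)) (h : Surp L) :
    MatchingLean (↑L : Multiset (Clause D)) := by
  rintro ⟨φ, ⟨P, hP1, hP2, hP3⟩, hne⟩
  have h1 := h _ Finset.inter_subset_right hne
  set W := FinFn.vars φ ∩ mvars (↑L : Multiset (Clause D)) with hW
  have hc : Multiset.card P = (nbr L (FinFn.vars φ)).card := by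
    rw [← Multiset.card_map Prod.fst P, hP1, touched_eq, Multiset.card_map]
    rfl
  have hN : nbr L W ⊆ nbr L (FinFn.vars φ) := by
    intro i hi
    rw [mem_nbr] at hi ⊢
    obtain ⟨v, hv, h⟩ := hi
    exact ⟨v, (Finset.mem_inter.mp hv).1, h⟩
  have hsub : (⟨P.map Prod.snd, hP2⟩ : Finset (V × ℕ)) ⊆ nodes D W := by
    intro u hu
    have hu' : u ∈ P.map Prod.snd := hu
    rw [Multiset.mem_map] at hu'
    obtain ⟨p, hp, rfl⟩ := hu'
    obtain ⟨hk, ε, hε, δ, hδ, -⟩ := hP3 p hp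
    rw [mem_nodes]
    refine ⟨?_, hk⟩
    rw [hW, Finset.mem_inter, mem_vars, mem_mvars]
    refine ⟨⟨δ, hδ⟩, p.1, ?_, (mem_vars _ _).2 ⟨ε, hε⟩⟩
    have : p.1 ∈ P.map Prod.fst := Multiset.mem_map_of_mem _ hp
    rw [hP1, touchedBy] at this
    exact (Multiset.mem_filter.mp this).1
  have h2 := Finset.card_le_card hsub
  have h3 : (⟨P.map Prod.snd, hP2⟩ : Finset (V × ℕ)).card = Multiset.card P := by
    rw [Finset.card_mk, Multiset.card_map]
  have h4 := Finset.card_le_card hN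
  omega

lemma build (hD : ∀ v, (D v).Nonempty) (L : List (Clause D)) (W : Finset V)
    (f : {i // i ∈ nbr L W} → V × ℕ) (hf : Function.Injective f)
    (hf2 : ∀ i, f i ∈ nodes D W ∧ (f i).1 ∈ FinFn.vars (L.get i.1)) :
    ∃ φ : PAssign D, IsMatchingAutarky φ (↑L : Multiset (Clause D)) ∧ FinFn.vars φ = W := by
  have h1 : ∀ i, ∃ ε, ((f i).1, ε) ∈ (L.get i.1).1 := fun i => (mem_vars _ _).1 (hf2 i).2
  choose ε hε using h1
  have h2 : ∀ v, ∃ a ∈ D v, ∀ i, (f i).1 = v → ε i ≠ a := by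
    intro v
    have hcard : ((Finset.univ.filter (fun i => (f i).1 = v)).image ε).card < (D v).card := by
      have hp := (hD v).card_pos
      have c1 : (Finset.univ.filter (fun i => (f i).1 = v)).card
          ≤ (Finset.range ((D v).card - 1)).card := by
        apply Finset.card_le_card_of_injOn (fun i => (f i).2)
        · intro i hi
          have hi' : (f i).1 = v := by simpa using hi
          have := ((mem_nodes _ _).1 (hf2 i).1).2
          rw [hi'] at this
          simpa using this
        · intro i hi j hj hij
          have hi' : (f i).1 = v := by simpa using hi
          have hj' : (f j).1 = v := by simpa using hj
          exact hf (Prod.ext (hi'.trans hj'.symm) hij)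
      have c2 := Finset.card_image_le (s := Finset.univ.filter (fun i => (f i).1 = v)) (f := ε)
      rw [Finset.card_range] at c1
      omega
    obtain ⟨a, ha, hna⟩ := Finset.exists_mem_notMem_of_card_lt_card hcard
    refine ⟨a, ha, fun i hi he => hna ?_⟩
    rw [Finset.mem_image]
    exact ⟨i, by simpa using hi, he⟩
  choose a ha hna using h2
  let φ : PAssign D := ⟨W.image (fun v => (v, a v)), by
    constructor
    · intro p hp
      rw [Finset.mem_image] at hp
      obtain ⟨v, -, rfl⟩ := hp
      exact ha v
    · intro p hp q hq hpq
      rw [Finset.mem_image] at hp hq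
      obtain ⟨v, -, rfl⟩ := hp
      obtain ⟨w, -, rfl⟩ := hq
      have hvw : v = w := hpq
      rw [hvw]⟩
  have hφ : FinFn.vars φ = W := by
    ext v
    rw [mem_vars]
    simp only [φ, Finset.mem_image, Prod.mk.injEq]
    constructor
    · rintro ⟨_, w, hw, rfl, -⟩; exact hw
    · intro hv; exact ⟨a v, v, hv, rfl, rfl⟩
  refine ⟨φ, ?_, hφ⟩
  refine ⟨(nbr L W).attach.val.map (fun i => (L.get i.1, f i)), ?_, ?_, ?_⟩
  · rw [hφ, touched_eq, Multiset.map_map]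
    have := Multiset.attach_map_val' (nbr L W).val L.get
    rw [← this]
    rfl
  · rw [Multiset.map_map]
    exact Multiset.Nodup.map hf (nbr L W).attach.nodup
  · intro p hp
    rw [Multiset.mem_map] at hp
    obtain ⟨i, -, rfl⟩ := hp
    have hn := (mem_nodes _ _).1 (hf2 i).1
    refine ⟨hn.2, ε i, hε i, a (f i).1, ?_, fun h => hna _ i rfl h.symm⟩
    exact Finset.mem_image.2 ⟨_, hn.1, rfl⟩

lemma exists_aut (hD : ∀ v, (D v).Nonempty) (L : List (Clause D)) (W : Finset V) :
    W.Nonempty → (nbr L W).card ≤ (nodes D W).card →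
    ∃ φ : PAssign D, IsMatchingAutarky φ (↑L : Multiset (Clause D)) ∧ (FinFn.vars φ).Nonempty ∧
      FinFn.vars φ ⊆ W := by
  induction W using Finset.strongInduction with
  | H W ih =>
  intro hne hle
  let t : {i // i ∈ nbr L W} → Finset (V × ℕ) :=
    fun i => nodes D (W ∩ FinFn.vars (L.get i.1))
  by_cases hall : ∀ s : Finset {i // i ∈ nbr L W}, s.card ≤ (s.biUnion t).card
  · rw [Finset.all_card_le_biUnion_card_iff_exists_injective] at hall
    obtain ⟨f, hf, hf2⟩ := hall
    obtain ⟨φ, h1, h2⟩ := build hD L W f hf (fun i => by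
      have := (mem_nodes _ _).1 (hf2 i)
      rw [Finset.mem_inter] at this
      exact ⟨(mem_nodes _ _).2 ⟨this.1.1, this.2⟩, this.1.2⟩)
    exact ⟨φ, h1, by rwa [h2], by rw [h2]⟩
  push Not at hall
  obtain ⟨s, hs⟩ := hall
  set X := s.biUnion (fun i => W ∩ FinFn.vars (L.get i.1)) with hX
  have hXW : X ⊆ W := Finset.biUnion_subset.2 fun i _ => Finset.inter_subset_left
  have hst : s.biUnion t = nodes D X := by
    ext u
    simp only [Finset.mem_biUnion, t, mem_nodes, hX]
    constructor
    · rintro ⟨i, hi, h1, h2⟩; exact ⟨⟨i, hi, h1⟩, h2⟩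
    · rintro ⟨⟨i, hi, h1⟩, h2⟩; exact ⟨i, hi, h1, h2⟩
  rw [hst] at hs
  have hsplit : nodes D W = nodes D (W \ X) ∪ nodes D X := by
    ext u
    simp only [Finset.mem_union, mem_nodes, Finset.mem_sdiff]
    have := @hXW u.1
    tauto
  have c1 : (nodes D W).card ≤ (nodes D (W \ X)).card + (nodes D X).card := by
    rw [hsplit]; exact Finset.card_union_le _ _
  have c2 : (nbr L (W \ X)).card + s.card ≤ (nbr L W).card := by
    rw [← Finset.card_map (Function.Embedding.subtype _) (s := s), ← Finset.card_union_of_disjoint]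
    · apply Finset.card_le_card
      intro i hi
      rw [Finset.mem_union] at hi
      rcases hi with hi | hi
      · rw [mem_nbr] at hi ⊢
        obtain ⟨v, hv, h⟩ := hi
        exact ⟨v, (Finset.mem_sdiff.1 hv).1, h⟩
      · rw [Finset.mem_map] at hi
        obtain ⟨j, -, rfl⟩ := hi
        exact j.2
    · rw [Finset.disjoint_left]
      intro i hi hi2
      rw [Finset.mem_map] at hi2
      obtain ⟨j, hj, rfl⟩ := hi2
      rw [mem_nbr] at hi
      obtain ⟨v, hv, h⟩ := hi
      rw [Finset.mem_sdiff] at hv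
      apply hv.2
      rw [hX, Finset.mem_biUnion]
      exact ⟨j, hj, Finset.mem_inter.2 ⟨hv.1, h⟩⟩
  have hpos : (nodes D (W \ X)).Nonempty := by
    rw [← Finset.card_pos]; omega
  have hne' : (W \ X).Nonempty := by
    obtain ⟨u, hu⟩ := hpos
    exact ⟨u.1, ((mem_nodes _ _).1 hu).1⟩
  have hXne : X.Nonempty := by
    have : 0 < s.card := by omega
    obtain ⟨i, hi⟩ := Finset.card_pos.1 this
    obtain ⟨v, hv, h⟩ := (mem_nbr _ _ _).1 i.2
    exact ⟨v, by
      rw [hX, Finset.mem_biUnion]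
      exact ⟨i, hi, Finset.mem_inter.2 ⟨hv, h⟩⟩⟩
  obtain ⟨φ, h1, h2, h3⟩ := ih (W \ X) (Finset.sdiff_ssubset hXW hXne) hne' (by omega)
  exact ⟨φ, h1, h2, h3.trans Finset.sdiff_subset⟩

lemma lean_iff_surp (hD : ∀ v, (D v).Nonempty) (L : List (Clause D)) :
    MatchingLean (↑L : Multiset (Clause D)) ↔ Surp L := by
  refine ⟨fun h W hW hne => ?_, lean_of_surp L⟩
  by_contra hcon
  obtain ⟨φ, h1, h2, h3⟩ := exists_aut hD L W hne (by omega)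
  refine h ⟨φ, h1, ?_⟩
  rw [Finset.inter_eq_left.2 (h3.trans hW)]
  exact h2

/-- neighbours of a variable node, as natural numbers -/
noncomputable def nb (L : List (Clause D)) (u : V × ℕ) : Finset ℕ :=
  (nbr L {u.1}).image Fin.val

lemma mem_nb (L : List (Clause D)) (u : V × ℕ) (i : ℕ) :
    i ∈ nb L u ↔ ∃ h : i < L.length, u.1 ∈ FinFn.vars (L.get ⟨i, h⟩) := by
  simp only [nb, Finset.mem_image, mem_nbr, Finset.mem_singleton]
  constructor
  · rintro ⟨j, ⟨v, rfl, hv⟩, rfl⟩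
    exact ⟨j.2, hv⟩
  · rintro ⟨h, hv⟩
    exact ⟨⟨i, h⟩, ⟨_, rfl, hv⟩, rfl⟩

lemma forest_of_surp (L : List (Clause D)) (h : Surp L) :
    ∃ E : Finset (ℕ × (V × ℕ)),
        (∀ e ∈ E, ∃ h : e.1 < L.length,
            e.2.1 ∈ FinFn.vars (L.get ⟨e.1, h⟩) ∧ e.2.2 < (D e.2.1).card - 1) ∧
        (∀ v ∈ mvars (↑L : Multiset (Clause D)), ∀ k < (D v).card - 1,
            (E.filter (fun e => e.2 = (v, k))).card = 2) ∧
        (∀ E' ⊆ E, E'.Nonempty →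
            E'.card + 1 ≤ (E'.image Prod.fst).card + (E'.image Prod.snd).card) := by
  set T := nodes D (mvars (↑L : Multiset (Clause D))) with hT
  have hA : ∀ I ⊆ T, I.Nonempty → I.card + 1 ≤ (I.biUnion (nb L)).card := by
    intro I hI hne
    have h1 := h (I.image Prod.fst) (by
      intro v hv
      rw [Finset.mem_image] at hv
      obtain ⟨u, hu, rfl⟩ := hv
      exact ((mem_nodes _ _).1 (hI hu)).1) (hne.image _)
    have h2 : I.card ≤ (nodes D (I.image Prod.fst)).card := by
      apply Finset.card_le_card
      intro u hu
      rw [mem_nodes]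
      exact ⟨Finset.mem_image_of_mem _ hu, ((mem_nodes _ _).1 (hI hu)).2⟩
    have h3 : (nbr L (I.image Prod.fst)).card ≤ (I.biUnion (nb L)).card := by
      rw [← Finset.card_image_of_injective _ Fin.val_injective]
      apply Finset.card_le_card
      intro i hi
      rw [Finset.mem_image] at hi
      obtain ⟨j, hj, rfl⟩ := hi
      rw [mem_nbr] at hj
      obtain ⟨v, hv, hj⟩ := hj
      rw [Finset.mem_image] at hv
      obtain ⟨u, hu, rfl⟩ := hv
      rw [Finset.mem_biUnion]
      exact ⟨u, hu, (mem_nb _ _ _).2 ⟨j.2, hj⟩⟩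
    omega
  obtain ⟨B, hB1, hB2, hB3⟩ := lov T _ (nb L) rfl hA
  let E : Finset (ℕ × (V × ℕ)) := T.biUnion (fun u => (B u).image (fun i => (i, u)))
  have hE : ∀ e, e ∈ E ↔ e.2 ∈ T ∧ e.1 ∈ B e.2 := by
    rintro ⟨i, u⟩
    simp only [E, Finset.mem_biUnion, Finset.mem_image, Prod.mk.injEq]
    constructor
    · rintro ⟨w, hw, j, hj, rfl, rfl⟩; exact ⟨hw, hj⟩
    · rintro ⟨hw, hj⟩; exact ⟨u, hw, i, hj, rfl, rfl⟩
  have hdeg : ∀ u ∈ T, (E.filter (fun e => e.2 = u)).card = 2 := by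
    intro u hu
    rw [← hB2 u hu, ← Finset.card_image_of_injective (B u)
      (f := fun i => (i, u)) (fun i j hij => (Prod.mk.inj hij).1)]
    congr 1
    ext e
    rw [Finset.mem_filter, hE, Finset.mem_image]
    constructor
    · rintro ⟨⟨h1, h2⟩, rfl⟩; exact ⟨e.1, h2, rfl⟩
    · rintro ⟨i, hi, rfl⟩; exact ⟨⟨hu, hi⟩, rfl⟩
  refine ⟨E, ?_, ?_, ?_⟩
  · intro e he
    rw [hE] at he
    obtain ⟨h1, h2⟩ := (mem_nb _ _ _).1 (hB1 _ he.2)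
    exact ⟨h1, h2, ((mem_nodes _ _).1 he.1).2⟩
  · intro v hv k hk
    exact hdeg (v, k) ((mem_nodes _ _).2 ⟨hv, hk⟩)
  · intro E' hE' hne
    set U := E'.image Prod.snd with hU
    set U2 := U.filter (fun u => (E'.filter (fun e => e.2 = u)).card = 2) with hU2
    have hUT : U ⊆ T := by
      intro u hu
      rw [hU, Finset.mem_image] at hu
      obtain ⟨e, he, rfl⟩ := hu
      exact ((hE _).1 (hE' he)).1
    have hle : ∀ u ∈ U, (E'.filter (fun e => e.2 = u)).card ≤ 2 := by
      intro u hu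
      rw [← hdeg u (hUT hu)]
      exact Finset.card_le_card (Finset.filter_subset_filter _ hE')
    have hcard : E'.card ≤ U.card + U2.card := by
      rw [Finset.card_eq_sum_card_image Prod.snd E', hU2, Finset.card_filter,
        Finset.card_eq_sum_ones U, ← Finset.sum_add_distrib]
      apply Finset.sum_le_sum
      intro u hu
      have := hle u hu
      split_ifs <;> omega
    have hmain : U2.card + 1 ≤ (E'.image Prod.fst).card := by
      by_cases hne2 : U2.Nonempty
      · refine (hB3 U2 ((Finset.filter_subset _ _).trans hUT) hne2).trans (Finset.card_le_card ?_)
        intro i hi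
        rw [Finset.mem_biUnion] at hi
        obtain ⟨u, hu, hi⟩ := hi
        rw [hU2, Finset.mem_filter] at hu
        have heq : E'.filter (fun e => e.2 = u) = E.filter (fun e => e.2 = u) := by
          apply Finset.eq_of_subset_of_card_le (Finset.filter_subset_filter _ hE')
          rw [hdeg u (hUT hu.1), hu.2]
        have : (i, u) ∈ E'.filter (fun e => e.2 = u) := by
          rw [heq, Finset.mem_filter, hE]
          exact ⟨⟨hUT hu.1, hi⟩, rfl⟩
        exact Finset.mem_image.2 ⟨_, (Finset.mem_filter.1 this).1, rfl⟩
      · rw [Finset.not_nonempty_iff_eq_empty] at hne2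
        rw [hne2, Finset.card_empty]
        exact (hne.image _).card_pos
    omega

lemma surp_of_forest (L : List (Clause D)) (E : Finset (ℕ × (V × ℕ)))
    (h1 : ∀ e ∈ E, ∃ h : e.1 < L.length,
            e.2.1 ∈ FinFn.vars (L.get ⟨e.1, h⟩) ∧ e.2.2 < (D e.2.1).card - 1)
    (h2 : ∀ v ∈ mvars (↑L : Multiset (Clause D)), ∀ k < (D v).card - 1,
            (E.filter (fun e => e.2 = (v, k))).card = 2)
    (h3 : ∀ E' ⊆ E, E'.Nonempty →
            E'.card + 1 ≤ (E'.image Prod.fst).card + (E'.image Prod.snd).card) : Surp L := by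
  intro W hW hne
  by_cases hn : (nodes D W).Nonempty
  · set E' := E.filter (fun e => e.2 ∈ nodes D W) with hE'
    have hc : E'.card = 2 * (nodes D W).card := by
      rw [Finset.card_eq_sum_card_fiberwise (s := E') (f := Prod.snd) (t := nodes D W)
        (fun e he => Finset.mem_coe.2 (Finset.mem_filter.1 (Finset.mem_coe.1 he)).2),
        Finset.sum_const_nat (m := 2), mul_comm]
      intro u hu
      have hu' := (mem_nodes _ _).1 hu
      rw [← h2 u.1 (hW hu'.1) u.2 hu'.2, hE', Finset.filter_filter]
      congr 1
      apply Finset.filter_congr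
      intro e he
      constructor
      · rintro ⟨-, h⟩; exact h
      · intro h
        have h : e.2 = u := h
        exact ⟨h ▸ hu, h⟩
    have hpos := hn.card_pos
    have h4 := h3 E' (Finset.filter_subset _ _) (by rw [← Finset.card_pos]; omega)
    have h5 : (E'.image Prod.snd).card ≤ (nodes D W).card := by
      apply Finset.card_le_card
      intro u hu
      rw [Finset.mem_image] at hu
      obtain ⟨e, he, rfl⟩ := hu
      exact (Finset.mem_filter.1 he).2
    have h6 : (E'.image Prod.fst).card ≤ (nbr L W).card := by
      rw [← Finset.card_image_of_injective (nbr L W) Fin.val_injective]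
      apply Finset.card_le_card
      intro i hi
      rw [Finset.mem_image] at hi
      obtain ⟨e, he, rfl⟩ := hi
      rw [hE', Finset.mem_filter, mem_nodes] at he
      obtain ⟨hl, hv, -⟩ := h1 e he.1
      exact Finset.mem_image.2 ⟨⟨e.1, hl⟩, (mem_nbr _ _ _).2 ⟨_, he.2.1, hv⟩, rfl⟩
    omega
  · rw [Finset.not_nonempty_iff_eq_empty] at hn
    rw [hn, Finset.card_empty]
    obtain ⟨v, hv⟩ := hne
    obtain ⟨C, hC, hvC⟩ := (mem_mvars _ _).1 (hW hv)
    obtain ⟨i, hi⟩ := List.get_of_mem (Multiset.mem_coe.1 hC)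
    have : (nbr L W).Nonempty := ⟨i, (mem_nbr _ _ _).2 ⟨v, hv, by rw [hi]; exact hvC⟩⟩
    exact this.card_pos

/-- `F` is matching lean iff the bipartite clause-variable graph
`B(F)` (here presented via an enumeration `L` of the clause-occurrences; the
variable-nodes are the pairs `(v,k)` with `k < |D v| − 1`) has a subgraph, given
by its edge set `E`, which is a forest (every non-empty subset of edges spans
strictly more vertices than edges), covers all variable-nodes, and in which every
variable-node has degree exactly `2`. -/
theorem matchingLean_iff_forest
    (hD : ∀ v, (D v).Nonempty) (F : Multiset (Clause D))
    (L : List (Clause D)) (hL : (↑L : Multiset (Clause D)) = F) :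
    MatchingLean F ↔
      ∃ E : Finset (ℕ × (V × ℕ)),
        (∀ e ∈ E, ∃ h : e.1 < L.length,
            e.2.1 ∈ FinFn.vars (L.get ⟨e.1, h⟩) ∧ e.2.2 < (D e.2.1).card - 1) ∧
        (∀ v ∈ mvars F, ∀ k < (D v).card - 1,
            (E.filter (fun e => e.2 = (v, k))).card = 2) ∧
        (∀ E' ⊆ E, E'.Nonempty →
            E'.card + 1 ≤ (E'.image Prod.fst).card + (E'.image Prod.snd).card) := by
  subst hL
  rw [lean_iff_surp hD]
  constructor
  · exact forest_of_surp L
  · rintro ⟨E, h1, h2, h3⟩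
    exact surp_of_forest L E h1 h2 h3

end GCLS
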